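/- arXiv:1602.03479 — 2 statements merged into one kernel-verified Lean document; each statement's English description precedes it below -/
import Mathlib

section
/- Let L be a finite-dimensional semisimple Lie algebra over a field of characteristic 0 (i.e. with nondegenerate Killing form). Then there exist elements x, y ∈ L such that L = ⁅x, L⁆ + ⁅y, L⁆, i.e. every element of L is a sum ⁅x, u⁆ + ⁅y, v⁆ for some u, v ∈ L. -/
/-!
The Killing form is invariant and nondegenerate, so the orthogonal complement of `⁅x, L⁆` is the
centralizer of `x`, and `⁅x, L⁆ + ⁅y, L⁆ = L` as soon as the centralizers of `x` and `y` meet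
trivially. Choose `x` so that its Engel subalgebra `H`, which contains its centralizer, is a Cartan
subalgebra. Then `H` is abelian and none of its nonzero elements is ad-nilpotent, and this alone
yields a `y` whose centralizer meets `H` trivially: if `0 ≠ h ∈ H` kills `y`, then adding to `y` a
nonzero element of the Fitting one-component of `ad h` strictly shrinks the annihilator of `y` in
`H`.
-/

open Module LieAlgebra
open scoped Cardinal

section CommutingEndomorphisms

variable {R V M : Type*} [CommRing R] [AddCommGroup V] [Module R V] [AddCommGroup M] [Module R M]

lemma map_eq_zero_and_map_eq_zero_of_map_add_eq_zero {f g : End R M} (hfg : Commute f g)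
    (hf : Disjoint f.ker f.range) {m z : M} (hm : m ∈ f.ker) (hz : z ∈ f.range)
    (h : g (m + z) = 0) : g m = 0 ∧ g z = 0 := by
  have hgm : g m ∈ f.ker := by
    rw [LinearMap.mem_ker, ← End.mul_apply, hfg.eq, End.mul_apply, hm, map_zero]
  have hgz : g z ∈ f.range := by
    obtain ⟨w, rfl⟩ := hz
    exact ⟨g w, LinearMap.congr_fun hfg.eq w⟩
  exact Submodule.disjoint_iff_add_eq_zero.mp hf hgm hgz (by rwa [← map_add])

lemma exists_ker_flip_lt_ker_flip [IsNoetherian R M] {φ : V →ₗ[R] End R M}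
    (hcomm : ∀ v w, Commute (φ v) (φ w)) {v : V} (hv : ¬ IsNilpotent (φ v)) {m : M}
    (hvm : φ v m = 0) : ∃ m', (φ.flip m').ker < (φ.flip m).ker := by
  obtain ⟨n, hdisj, hn⟩ := ((φ v).eventually_disjoint_ker_pow_range_pow.and
    (Filter.eventually_ne_atTop 0)).exists
  have hker : (φ v).ker ≤ (φ v ^ n).ker := fun u hu ↦
    End.pow_map_zero_of_le (Nat.one_le_iff_ne_zero.mpr hn) (by rwa [pow_one])
  obtain ⟨w, hw⟩ : ∃ w, (φ v ^ n) w ≠ 0 := by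
    by_contra! h
    exact hv ⟨n, LinearMap.ext h⟩
  have hsplit (u : V) (hu : φ u (m + (φ v ^ n) w) = 0) :
      φ u m = 0 ∧ φ u ((φ v ^ n) w) = 0 :=
    map_eq_zero_and_map_eq_zero_of_map_add_eq_zero ((hcomm v u).pow_left n) hdisj (hker hvm)
      ⟨w, rfl⟩ hu
  refine ⟨m + (φ v ^ n) w, SetLike.lt_iff_le_and_exists.mpr
    ⟨fun u hu ↦ (hsplit u hu).1, v, hvm, fun hvw ↦ hw ?_⟩⟩
  exact Submodule.disjoint_def.mp hdisj _ (hker (hsplit v hvw).2) ⟨w, rfl⟩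

lemma exists_ker_flip_eq_bot_of_commute [IsArtinian R V] [IsNoetherian R M] {φ : V →ₗ[R] End R M}
    (hcomm : ∀ v w, Commute (φ v) (φ w)) (hnil : ∀ v, IsNilpotent (φ v) → v = 0) :
    ∃ m, (φ.flip m).ker = ⊥ := by
  obtain ⟨_, ⟨m, rfl⟩, hmin⟩ := IsArtinian.set_has_minimal
    (Set.range fun m ↦ (φ.flip m).ker) (Set.range_nonempty _)
  refine ⟨m, (Submodule.eq_bot_iff _).mpr fun v hvm ↦ ?_⟩
  by_contra hv
  obtain ⟨m', hm'⟩ := exists_ker_flip_lt_ker_flip hcomm (mt (hnil v) hv) hvm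
  exact hmin _ ⟨m', rfl⟩ hm'

end CommutingEndomorphisms

section InvariantForm

lemma orthogonal_range_toEnd {R L M : Type*} [CommRing R] [LieRing L] [LieAlgebra R L]
    [AddCommGroup M] [Module R M] [LieRingModule L M] [LieModule R L M]
    {Φ : LinearMap.BilinForm R M} (hΦ : Φ.Nondegenerate) (hinv : Φ.lieInvariant L) (x : L) :
    Φ.orthogonal (LieModule.toEnd R L M x).range = (LieModule.toEnd R L M x).ker := by
  ext w
  calc w ∈ Φ.orthogonal (LieModule.toEnd R L M x).range
      ↔ ∀ u, Φ ⁅x, u⁆ w = 0 := by simp [LinearMap.BilinForm.mem_orthogonal_iff]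
    _ ↔ ∀ u, Φ u ⁅x, w⁆ = 0 := by simp only [hinv x, neg_eq_zero]
    _ ↔ w ∈ (LieModule.toEnd R L M x).ker :=
        ⟨hΦ.2 ⁅x, w⁆, fun h u ↦ by rw [← LieModule.toEnd_apply_apply R, h, map_zero]⟩

variable {K : Type*} [Field K]

lemma eq_top_of_orthogonal_eq_bot {V : Type*} [AddCommGroup V] [Module K V] [FiniteDimensional K V]
    {B : LinearMap.BilinForm K V} (hB : B.Nondegenerate) {W : Submodule K V}
    (hW : B.orthogonal W = ⊥) : W = ⊤ := by
  have hrank := LinearMap.BilinForm.finrank_orthogonal hB W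
  rw [hW, finrank_bot] at hrank
  exact Submodule.eq_top_of_finrank_eq
    (W.finrank_le.antisymm (Nat.sub_eq_zero_iff_le.mp hrank.symm))

lemma codisjoint_range_toEnd_of_disjoint_ker_toEnd {L M : Type*} [LieRing L] [LieAlgebra K L]
    [AddCommGroup M] [Module K M] [LieRingModule L M] [LieModule K L M] [FiniteDimensional K M]
    {Φ : LinearMap.BilinForm K M} (hΦ : Φ.Nondegenerate) (hinv : Φ.lieInvariant L) {x y : L}
    (hxy : Disjoint (LieModule.toEnd K L M x).ker (LieModule.toEnd K L M y).ker) :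
    Codisjoint (LieModule.toEnd K L M x).range (LieModule.toEnd K L M y).range := by
  rw [← orthogonal_range_toEnd hΦ hinv, ← orthogonal_range_toEnd hΦ hinv] at hxy
  refine codisjoint_iff.mpr (eq_top_of_orthogonal_eq_bot hΦ (eq_bot_iff.mpr ?_))
  exact hxy (LinearMap.BilinForm.orthogonal_le le_sup_left)
    (LinearMap.BilinForm.orthogonal_le le_sup_right)

end InvariantForm

section Lie

variable {R K L : Type*} [CommRing R] [Field K] [LieRing L] [LieAlgebra R L] [LieAlgebra K L]

lemma isKilling_of_killingForm_nondegenerate (h : (killingForm R L).Nondegenerate) :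
    IsKilling R L where
  killingCompl_top_eq_bot := by
    rw [← LieSubmodule.toSubmodule_inj]
    exact (LieIdeal.coe_killingCompl_top R L).trans
      (LinearMap.separatingLeft_iff_ker_eq_bot.mp h.1)

lemma ker_ad_le_engel (x : L) : (ad R L x).ker ≤ (LieSubalgebra.engel R x).toSubmodule :=
  fun y hy ↦ (LieSubalgebra.mem_engel_iff R x y).mpr ⟨1, by rwa [pow_one]⟩

variable [FiniteDimensional K L]

lemma exists_disjoint_ker_ad_of_isCartanSubalgebra [IsKilling K L] (H : LieSubalgebra K L)
    [H.IsCartanSubalgebra] : ∃ y, Disjoint H.toSubmodule (ad K L y).ker := by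
  obtain ⟨y, hy⟩ : ∃ y, ((LieModule.toEnd K H L : H →ₗ[K] End K L).flip y).ker = ⊥ := by
    refine exists_ker_flip_eq_bot_of_commute (fun a b ↦ ?_) fun a ha ↦ ?_
    · exact LieModule.commute_toEnd_of_mem_center_left L (fun c ↦ trivial_lie_zero H H c a) b
    · exact Subtype.ext
        (IsKilling.eq_zero_of_isNilpotent_ad_of_mem_isCartanSubalgebra K L H a.2 ha)
  refine ⟨y, Submodule.disjoint_def.mpr fun a haH hya ↦ ?_⟩
  have hay : ⁅a, y⁆ = 0 := by rw [← lie_skew, ← ad_apply K, hya, neg_zero]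
  exact congrArg Subtype.val ((Submodule.eq_bot_iff _).mp hy ⟨a, haH⟩ hay)

lemma exists_disjoint_ker_ad_ker_ad [IsKilling K L] (hcard : finrank K L ≤ #K) :
    ∃ x y : L, Disjoint (ad K L x).ker (ad K L y).ker := by
  obtain ⟨x, _⟩ := exists_isCartanSubalgebra_engel_of_finrank_le_card K L hcard
  obtain ⟨y, hy⟩ := exists_disjoint_ker_ad_of_isCartanSubalgebra (LieSubalgebra.engel K x)
  exact ⟨x, y, hy.mono_left (ker_ad_le_engel x)⟩

theorem exists_two_ad_ranges_span_general (hcard : finrank K L ≤ #K)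
    (hnd : (killingForm K L).Nondegenerate) :
    ∃ x y : L, ∀ z : L, ∃ u v : L, z = ⁅x, u⁆ + ⁅y, v⁆ := by
  have := isKilling_of_killingForm_nondegenerate hnd
  obtain ⟨x, y, hxy⟩ := exists_disjoint_ker_ad_ker_ad (L := L) hcard
  have hspan : Codisjoint (ad K L x).range (ad K L y).range :=
    codisjoint_range_toEnd_of_disjoint_ker_toEnd hnd (LieModule.traceForm_lieInvariant K L L) hxy
  refine ⟨x, y, fun z ↦ ?_⟩
  obtain ⟨_, _, ⟨u, rfl⟩, ⟨v, rfl⟩, h⟩ := Submodule.codisjoint_iff_exists_add_eq.mp hspan z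
  exact ⟨u, v, h.symm⟩

end Lie

/-- A semisimple Lie algebra over a field of characteristic `0` satisfies
`L = ⁅x, L⁆ + ⁅y, L⁆` for some `x`, `y`. -/
theorem exists_two_ad_ranges_span (K L : Type*) [Field K] [CharZero K]
    [LieRing L] [LieAlgebra K L] [FiniteDimensional K L]
    (hnd : (killingForm K L).Nondegenerate) :
    ∃ x y : L, ∀ z : L, ∃ u v : L, z = ⁅x, u⁆ + ⁅y, v⁆ :=
  exists_two_ad_ranges_span_general
    (Cardinal.natCast_le_aleph0.trans (Cardinal.aleph0_le_mk K)) hnd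
end

section
/- Let L be a finite-dimensional real Lie algebra whose Killing form κ is negative definite, let C be a Cartan subalgebra of L, and let C⊥ = {x ∈ L : κ(x, c) = 0 for all c ∈ C}. Let V ⊆ L be a subset stable under every Lie algebra automorphism of L (g(V) ⊆ V for every Lie algebra self-equivalence g of L). Then V equals the union, over all Lie algebra automorphisms g of L, of the images g(V ∩ C⊥); that is, for every v ∈ V there exist an automorphism g and w ∈ V ∩ C⊥ with v = g(w). -/
/-
Fix `v` and let `P` be the `κ`-orthogonal projection onto `C`. Automorphisms preserve the definite
form `κ`, so they form a compact set and `g ↦ κ(P (g v), P (g v))` attains its maximum; write `w`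
for the maximising `g v` and `h = P w`. Along the automorphisms `exp (t ad y)`, the first variation
gives `⁅h, w⁆ = 0`. For `y` orthogonal to the centraliser of `h` we have `P ⁅y, w⁆ = 0`, so the
second variation reads `κ(y, ad w (ad h y)) ≤ 0`; for `y` in the centraliser this expression
vanishes. As `-κ` is positive definite, `0 ≤ tr (ad w ∘ ad h) = κ(w, h) = κ(h, h)`, hence `h = 0`,
that is, `w ∈ C⊥`.
-/

open NormedSpace

lemma deriv_deriv_nonpos_of_isLocalMax {f : ℝ → ℝ} {x : ℝ} (h : IsLocalMax f x)
    (hf : ContinuousAt f x) : deriv (deriv f) x ≤ 0 := by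
  by_contra! hpos
  have hmin : IsLocalMin f x := isLocalMin_of_deriv_deriv_pos hpos h.deriv_eq_zero hf
  have hconst : f =ᶠ[nhds x] fun _ => f x := by
    filter_upwards [h, hmin] with y hle hge using le_antisymm hle hge
  have hzero : deriv (deriv f) x = 0 := by simpa using hconst.deriv.deriv_eq
  exact hpos.ne' hzero

section OneParameterGroup

variable {𝕂 E : Type*} [RCLike 𝕂] [NormedAddCommGroup E] [NormedSpace 𝕂 E] [CompleteSpace E]

lemma hasDerivAt_exp_smul_apply (D : E →L[𝕂] E) (x : E) (t : 𝕂) :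
    HasDerivAt (fun s : 𝕂 => exp (s • D) x) (D (exp (t • D) x)) t := by
  simpa using (hasDerivAt_exp_smul_const' (𝕂 := 𝕂) D t).clm_apply (hasDerivAt_const t x)

lemma exp_neg_apply_exp_apply (D : E →L[𝕂] E) (x : E) : exp (-D) (exp D x) = x := by
  let : NormedAlgebra ℝ (E →L[𝕂] E) := NormedAlgebra.restrictScalars ℝ 𝕂 _
  let : NormedAlgebra ℚ (E →L[𝕂] E) := NormedAlgebra.restrictScalars ℚ ℝ _
  rw [← mul_apply_eq_comp, ← exp_add_of_commute (Commute.refl D).neg_left, neg_add_cancel,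
    exp_zero, one_apply_eq_self]

lemma exp_apply_bilinear_of_derivation (B : E →L[𝕂] E →L[𝕂] E) (D : E →L[𝕂] E)
    (hD : ∀ x y, D (B x y) = B (D x) y + B x (D y)) (x y : E) :
    exp D (B x y) = B (exp D x) (exp D y) := by
  let φ : 𝕂 → E := fun s => exp (s • -D) (B (exp (s • D) x) (exp (s • D) y))
  have hφ (s : 𝕂) : HasDerivAt φ 0 s := by
    have hB := (B.hasFDerivAt.comp_hasDerivAt s (hasDerivAt_exp_smul_apply D x s)).clm_apply
      (hasDerivAt_exp_smul_apply D y s)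
    refine ((hasDerivAt_exp_smul_const (𝕂 := 𝕂) (-D) s).clm_apply hB).congr_deriv ?_
    simp only [Function.comp_apply, mul_apply_eq_comp, neg_apply, hD, map_neg, map_add]
    abel
  have hconst : φ 1 = φ 0 :=
    is_const_of_deriv_eq_zero (fun s => (hφ s).differentiableAt) (fun s => (hφ s).deriv) 1 0
  have hφ₁ : exp (-D) (B (exp D x) (exp D y)) = B x y := by simpa [φ] using hconst
  simpa [hφ₁] using exp_neg_apply_exp_apply (-D) (B (exp D x) (exp D y))

end OneParameterGroup

lemma first_variation_eq_zero_and_second_variation_nonpos_of_isLocalMax_exp {E : Type*}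
    [NormedAddCommGroup E] [NormedSpace ℝ E] [CompleteSpace E] (b : E →L[ℝ] E →L[ℝ] ℝ)
    (hb : ∀ x y, b x y = b y x) (D : E →L[ℝ] E) (x : E)
    (hmax : IsLocalMax (fun t : ℝ => b (exp (t • D) x) (exp (t • D) x)) 0) :
    b x (D x) = 0 ∧ b (D x) (D x) + b x (D (D x)) ≤ 0 := by
  let γ : ℝ → E := fun t => exp (t • D) x
  have hγ₀ : γ 0 = x := by simp [γ]
  have hγ (t : ℝ) : HasDerivAt γ (D (γ t)) t := hasDerivAt_exp_smul_apply D x t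
  have hDγ (t : ℝ) : HasDerivAt (fun s => D (γ s)) (D (D (γ t))) t :=
    D.hasFDerivAt.comp_hasDerivAt t (hγ t)
  have hf (t : ℝ) : HasDerivAt (fun s => b (γ s) (γ s)) (2 * b (γ t) (D (γ t))) t := by
    refine ((b.hasFDerivAt.comp_hasDerivAt t (hγ t)).clm_apply (hγ t)).congr_deriv ?_
    rw [hb (D (γ t)), two_mul, Function.comp_apply]
  have hf' (t : ℝ) : HasDerivAt (fun s => 2 * b (γ s) (D (γ s)))
      (2 * (b (D (γ t)) (D (γ t)) + b (γ t) (D (D (γ t))))) t :=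
    ((b.hasFDerivAt.comp_hasDerivAt t (hγ t)).clm_apply (hDγ t)).const_mul 2
  have hfirst := hmax.hasDerivAt_eq_zero (hf 0)
  have hsecond := deriv_deriv_nonpos_of_isLocalMax hmax (hf 0).continuousAt
  rw [funext fun t => (hf t).deriv, (hf' 0).deriv] at hsecond
  rw [hγ₀] at hfirst hsecond
  constructor <;> linarith

lemma isCompact_setOf_norm_preserving_multiplicative {E : Type*} [NormedAddCommGroup E]
    [NormedSpace ℝ E] [FiniteDimensional ℝ E] (B : E →L[ℝ] E →L[ℝ] E) :
    IsCompact {f : E →L[ℝ] E | (∀ x, ‖f x‖ = ‖x‖) ∧ ∀ x y, f (B x y) = B (f x) (f y)} := by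
  have : ProperSpace (E →L[ℝ] E) := FiniteDimensional.proper ℝ _
  refine (isCompact_closedBall (0 : E →L[ℝ] E) 1).of_isClosed_subset ?_ fun f hf => ?_
  · simp only [Set.ofPred_and, Set.ofPred_forall]
    refine (isClosed_iInter fun x => isClosed_eq ?_ ?_).inter
      (isClosed_iInter fun x => isClosed_iInter fun y => isClosed_eq ?_ ?_) <;> fun_prop
  · rw [mem_closedBall_zero_iff]
    exact f.opNorm_le_bound zero_le_one fun x => by rw [hf.1 x, one_mul]

section BilinearForm

lemma anisotropic_of_forall_apply_self_neg {R M : Type*} [CommRing R] [Preorder R]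
    [AddCommGroup M] [Module R M] {B : LinearMap.BilinForm R M}
    (hB : ∀ x, x ≠ 0 → B x x < 0) (x : M) (hx : B x x = 0) : x = 0 :=
  by_contra fun h => (hB x h).ne hx

lemma exists_linearMap_mem_forall_apply_eq {K V : Type*} [Field K] [AddCommGroup V] [Module K V]
    (B : LinearMap.BilinForm K V) (hB : ∀ x, B x x = 0 → x = 0)
    (W : Submodule K V) [FiniteDimensional K W] :
    ∃ P : V →ₗ[K] V, (∀ x, P x ∈ W) ∧ ∀ x, ∀ y ∈ W, B (P x) y = B x y := by
  have hW : (B.restrict W).Nondegenerate :=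
    ⟨fun x hx => Subtype.ext (hB x (hx x)), fun x hx => Subtype.ext (hB x (hx x))⟩
  let restrictDual : V →ₗ[K] Module.Dual K W := W.dualRestrict ∘ₗ B
  refine ⟨W.subtype ∘ₗ ((B.restrict W).toDual hW).symm.toLinearMap ∘ₗ restrictDual,
    fun x => Subtype.coe_prop _, fun x y hy => ?_⟩
  exact LinearMap.BilinForm.apply_toDual_symm_apply (hB := hW) (restrictDual x) ⟨y, hy⟩

variable {V : Type*} [AddCommGroup V] [Module ℝ V]

/-- The inner product given by a positive definite symmetric bilinear form. It is kept as a
`Core`, because the norm is only ever an auxiliary structure on a space that has none. -/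
abbrev innerProductCoreOfPosDef (B : LinearMap.BilinForm ℝ V) (hB : B.IsSymm)
    (hpos : ∀ x, x ≠ 0 → 0 < B x x) : InnerProductSpace.Core ℝ V where
  inner x y := B x y
  conj_inner_symm x y := hB.eq y x
  re_inner_nonneg x := by
    rcases eq_or_ne x 0 with rfl | hx
    · simp
    · exact (hpos x hx).le
  add_left x y z := by simp
  smul_left x y r := by simp
  definite x hx := by_contra fun h => (hpos x h).ne' hx

lemma trace_nonneg_of_forall_apply_self_nonneg [FiniteDimensional ℝ V]
    (B : LinearMap.BilinForm ℝ V) (hB : B.IsSymm) (hpos : ∀ x, x ≠ 0 → 0 < B x x)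
    (T : V →ₗ[ℝ] V) (hT : ∀ x, 0 ≤ B x (T x)) : 0 ≤ LinearMap.trace ℝ V T := by
  let core := innerProductCoreOfPosDef B hB hpos
  let : NormedAddCommGroup V := core.toNormedAddCommGroup
  let : InnerProductSpace ℝ V := InnerProductSpace.ofCore core.toCore
  rw [T.trace_eq_sum_inner (stdOrthonormalBasis ℝ V)]
  exact Finset.sum_nonneg fun i _ => hT _

end BilinearForm

section LieAlgebra

lemma isKilling_of_killingForm_anisotropic {R L : Type*} [CommRing R] [LieRing L] [LieAlgebra R L]
    (h : ∀ x : L, killingForm R L x x = 0 → x = 0) : LieAlgebra.IsKilling R L where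
  killingCompl_top_eq_bot := (LieSubmodule.eq_bot_iff _).2 fun x hx =>
    h x ((LieIdeal.mem_killingCompl R L ⊤).1 hx x (LieSubmodule.mem_top x))

variable {L : Type*} [LieRing L] [LieAlgebra ℝ L] [FiniteDimensional ℝ L]

local notation "κ" => killingForm ℝ L

lemma first_variation_eq_zero_and_second_variation_nonpos_of_forall_lieEquiv_le
    (b : LinearMap.BilinForm ℝ L) (hb : b.IsSymm) (w : L)
    (hmax : ∀ g : L ≃ₗ⁅ℝ⁆ L, b (g w) (g w) ≤ b w w) (D : LieDerivation ℝ L L) :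
    b w (D w) = 0 ∧ b (D w) (D w) + b w (D (D w)) ≤ 0 := by
  let bracket : L →ₗ[ℝ] L →ₗ[ℝ] L := (LieModule.toEnd ℝ L L : L →ₗ[ℝ] Module.End ℝ L)
  let coords := (Module.finBasis ℝ L).equivFun
  let : NormedAddCommGroup L := NormedAddCommGroup.induced L _ coords coords.injective
  let : NormedSpace ℝ L := NormedSpace.induced ℝ L _ coords
  have : CompleteSpace L := FiniteDimensional.complete ℝ L
  let B : L →L[ℝ] L →L[ℝ] L := bracket.toContinuousBilinearMap
  let Dc : L →L[ℝ] L := D.toLinearMap.toContinuousLinearMap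
  refine first_variation_eq_zero_and_second_variation_nonpos_of_isLocalMax_exp
    b.toContinuousBilinearMap hb.eq Dc w (Filter.Eventually.of_forall fun t => ?_)
  have hDt (x y : L) : (t • Dc) (B x y) = B ((t • Dc) x) y + B x ((t • Dc) y) := by
    change t • D ⁅x, y⁆ = ⁅t • D x, y⁆ + ⁅x, t • D y⁆
    rw [D.apply_lie_eq_add]
    simp [add_comm]
  let expD : L →ₗ⁅ℝ⁆ L :=
    { (exp (t • Dc) : L →L[ℝ] L).toLinearMap with
      map_lie' := fun {x y} => exp_apply_bilinear_of_derivation B (t • Dc) hDt x y }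
  have hinj : Function.Injective expD :=
    Function.LeftInverse.injective (exp_neg_apply_exp_apply (t • Dc))
  have hle : b (exp (t • Dc) w) (exp (t • Dc) w) ≤ b w w :=
    hmax (LieEquiv.ofBijective expD
      (IsArtinian.bijective_of_injective_endomorphism expD.toLinearMap hinj))
  simpa using hle

lemma exists_lieEquiv_forall_apply_self_le (hκ : ∀ x : L, x ≠ 0 → κ x x < 0)
    (b : LinearMap.BilinForm ℝ L) (v : L) :
    ∃ g : L ≃ₗ⁅ℝ⁆ L, ∀ g' : L ≃ₗ⁅ℝ⁆ L, b (g' v) (g' v) ≤ b (g v) (g v) := by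
  let bracket : L →ₗ[ℝ] L →ₗ[ℝ] L := (LieModule.toEnd ℝ L L : L →ₗ[ℝ] Module.End ℝ L)
  have hsymm : (-κ).IsSymm :=
    (LinearMap.BilinForm.isSymm_iff.2 (LieModule.traceForm_isSymm ..)).neg
  let core := innerProductCoreOfPosDef (-κ) hsymm fun x hx => neg_pos.2 (hκ x hx)
  let : NormedAddCommGroup L := core.toNormedAddCommGroup
  let : InnerProductSpace ℝ L := InnerProductSpace.ofCore core.toCore
  let B : L →L[ℝ] L →L[ℝ] L := bracket.toContinuousBilinearMap
  let bc : L →L[ℝ] L →L[ℝ] ℝ := b.toContinuousBilinearMap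
  have hcont : Continuous fun f : L →L[ℝ] L => bc (f v) (f v) := by fun_prop
  obtain ⟨f, ⟨hnorm, hlie⟩, hmax⟩ :=
    (isCompact_setOf_norm_preserving_multiplicative B).exists_isMaxOn
      ⟨1, fun x => rfl, fun x y => rfl⟩ hcont.continuousOn
  have hinj : Function.Injective f := (AddMonoidHomClass.isometry_of_norm f hnorm).injective
  let F : L →ₗ⁅ℝ⁆ L := { f.toLinearMap with map_lie' := fun {x y} => hlie x y }
  refine ⟨LieEquiv.ofBijective F
    (IsArtinian.bijective_of_injective_endomorphism f.toLinearMap hinj), fun g' => ?_⟩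
  refine hmax (a := g'.toLinearEquiv.toLinearMap.toContinuousLinearMap) ⟨fun x => ?_, g'.map_lie⟩
  rw [norm_eq_sqrt_real_inner, norm_eq_sqrt_real_inner]
  exact congrArg (fun r => √(-r)) (LieAlgebra.killingForm_of_equiv_apply g' x x)

lemma killingForm_nonneg_of_lie_eq_zero (hκ : ∀ x : L, x ≠ 0 → κ x x < 0) {h w : L}
    (hhw : ⁅h, w⁆ = 0) (hle : ∀ y, (∀ z, ⁅h, z⁆ = 0 → κ y z = 0) → κ y ⁅w, ⁅h, y⁆⁆ ≤ 0) :
    0 ≤ κ w h := by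
  have hcomm (z : L) : ⁅h, ⁅w, z⁆⁆ = ⁅w, ⁅h, z⁆⁆ := by rw [leibniz_lie, hhw, zero_lie, zero_add]
  obtain ⟨P, hPh, hPκ⟩ := exists_linearMap_mem_forall_apply_eq κ
    (anisotropic_of_forall_apply_self_neg hκ) (LinearMap.ker (LieAlgebra.ad ℝ L h))
  have hsplit (x : L) : κ x ⁅w, ⁅h, x⁆⁆ = κ (x - P x) ⁅w, ⁅h, x - P x⁆⁆ := by
    have hPx : ⁅h, P x⁆ = 0 := hPh x
    have hzero (y : L) : κ (P x) ⁅w, ⁅h, y⁆⁆ = 0 := by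
      rw [← hcomm, ← neg_eq_zero, ← LieModule.traceForm_apply_lie_apply', hPx]
      simp
    rw [lie_sub, hPx, sub_zero, map_sub, LinearMap.sub_apply, hzero, sub_zero]
  have hsymm : (-κ).IsSymm :=
    (LinearMap.BilinForm.isSymm_iff.2 (LieModule.traceForm_isSymm ..)).neg
  rw [killingForm_apply_apply]
  refine trace_nonneg_of_forall_apply_self_nonneg (-κ) hsymm (fun x hx => neg_pos.2 (hκ x hx))
    (LieAlgebra.ad ℝ L w ∘ₗ LieAlgebra.ad ℝ L h) fun x => ?_
  change 0 ≤ -κ x ⁅w, ⁅h, x⁆⁆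
  rw [hsplit, neg_nonneg]
  refine hle _ fun z hz => ?_
  rw [map_sub, LinearMap.sub_apply, hPκ x z hz, sub_self]

lemma eq_zero_of_forall_lieEquiv_killingForm_le (hκ : ∀ x : L, x ≠ 0 → κ x x < 0)
    (C : LieSubalgebra ℝ L) [IsLieAbelian C] (P : L →ₗ[ℝ] L) (hPC : ∀ x, P x ∈ C)
    (hPκ : ∀ x, ∀ c ∈ C, κ (P x) c = κ x c) {w : L}
    (hmax : ∀ g : L ≃ₗ⁅ℝ⁆ L, κ (P (g w)) (P (g w)) ≤ κ (P w) (P w)) : P w = 0 := by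
  have hcomm : ∀ x y, κ x y = κ y x := LieModule.traceForm_comm ℝ L L
  have hinv : ∀ x y z, κ ⁅x, y⁆ z = κ x ⁅y, z⁆ := LieModule.traceForm_apply_lie_apply ℝ L L
  have hPP (x y : L) : κ (P x) (P y) = κ x (P y) := hPκ x (P y) (hPC y)
  have hPP' (x y : L) : κ (P x) (P y) = κ (P x) y := by rw [hcomm, hPP, hcomm]
  have hvar (y : L) : κ (P w) ⁅y, w⁆ = 0 ∧
      κ ⁅y, w⁆ (P ⁅y, w⁆) + κ (P w) ⁅y, ⁅y, w⁆⁆ ≤ 0 := by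
    have hvarP := first_variation_eq_zero_and_second_variation_nonpos_of_forall_lieEquiv_le
      (LinearMap.compl₁₂ κ P P) ⟨fun x y => hcomm (P x) (P y)⟩ w hmax (LieDerivation.ad ℝ L y)
    simp only [LinearMap.compl₁₂_apply, LieDerivation.ad_apply_apply] at hvarP
    rwa [hPP' w, hPP' w, hPP ⁅y, w⁆] at hvarP
  have hlie : ⁅P w, w⁆ = 0 := by
    refine anisotropic_of_forall_apply_self_neg hκ _ ?_
    rw [hinv, ← lie_skew, map_neg, (hvar _).1, neg_zero]
  have hnonneg : 0 ≤ κ w (P w) := by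
    refine killingForm_nonneg_of_lie_eq_zero hκ hlie fun y hy => ?_
    have hproj : κ ⁅y, w⁆ (P ⁅y, w⁆) = 0 := by
      have hC : ⁅P w, P ⁅y, w⁆⁆ = 0 :=
        congrArg Subtype.val (trivial_lie_zero C C ⟨P w, hPC _⟩ ⟨P ⁅y, w⁆, hPC _⟩)
      rw [hinv]
      refine hy _ ?_
      rw [leibniz_lie, hlie, zero_lie, zero_add, hC, lie_zero]
    calc κ y ⁅w, ⁅P w, y⁆⁆ = κ (P w) ⁅y, ⁅y, w⁆⁆ := by rw [← hinv, hcomm, hinv]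
      _ ≤ 0 := by simpa only [hproj, zero_add] using (hvar y).2
  by_contra hne
  exact (hκ (P w) hne).not_ge (hPP w w ▸ hnonneg)

lemma exists_lieEquiv_forall_killingForm_eq_zero (hκ : ∀ x : L, x ≠ 0 → κ x x < 0)
    (C : LieSubalgebra ℝ L) [IsLieAbelian C] (v : L) :
    ∃ g : L ≃ₗ⁅ℝ⁆ L, ∀ c ∈ C, κ (g v) c = 0 := by
  obtain ⟨P, hPC, hPκ⟩ := exists_linearMap_mem_forall_apply_eq κ
    (anisotropic_of_forall_apply_self_neg hκ) C.toSubmodule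
  obtain ⟨g, hmax⟩ := exists_lieEquiv_forall_apply_self_le hκ (LinearMap.compl₁₂ κ P P) v
  have hP : P (g v) = 0 := eq_zero_of_forall_lieEquiv_killingForm_le hκ C P hPC hPκ
    fun g' => hmax (g.trans g')
  exact ⟨g, fun c hc => by rw [← hPκ (g v) c hc, hP, map_zero, LinearMap.zero_apply]⟩

end LieAlgebra

theorem stable_set_eq_union_of_images_general (L : Type*) [LieRing L] [LieAlgebra ℝ L]
    [FiniteDimensional ℝ L]
    (hneg : ∀ x : L, x ≠ 0 → killingForm ℝ L x x < 0)
    (C : LieSubalgebra ℝ L) [IsLieAbelian C]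
    (V : Set L) (hV : ∀ g : L ≃ₗ⁅ℝ⁆ L, ∀ v ∈ V, g v ∈ V) :
    V = ⋃ g : L ≃ₗ⁅ℝ⁆ L,
      (fun x => g x) '' (V ∩ {x : L | ∀ c ∈ C, killingForm ℝ L x c = 0}) := by
  refine Set.Subset.antisymm (fun v hv => ?_) (Set.iUnion_subset fun g => ?_)
  · obtain ⟨g, hg⟩ := exists_lieEquiv_forall_killingForm_eq_zero hneg C v
    exact Set.mem_iUnion.2 ⟨g.symm, g v, ⟨hV g v hv, hg⟩, g.symm_apply_apply v⟩
  · rintro _ ⟨w, hw, rfl⟩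
    exact hV g w hw.1

/-- If `V ⊆ L` is stable under all Lie algebra automorphisms of a compact semisimple real Lie
algebra `L`, and `C` is a Cartan subalgebra, then `V` is the union of the automorphism images
of `V ∩ C⊥`. -/
theorem stable_set_eq_union_of_images (L : Type*) [LieRing L] [LieAlgebra ℝ L]
    [FiniteDimensional ℝ L]
    (hneg : ∀ x : L, x ≠ 0 → killingForm ℝ L x x < 0)
    (C : LieSubalgebra ℝ L) (hC : C.IsCartanSubalgebra)
    (V : Set L) (hV : ∀ g : L ≃ₗ⁅ℝ⁆ L, ∀ v ∈ V, g v ∈ V) :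
    V = ⋃ g : L ≃ₗ⁅ℝ⁆ L,
      (fun x => g x) '' (V ∩ {x : L | ∀ c ∈ C, killingForm ℝ L x c = 0}) := by
  have := isKilling_of_killingForm_anisotropic (anisotropic_of_forall_apply_self_neg hneg)
  exact stable_set_eq_union_of_images_general L hneg C V hV
end
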